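/- For every integer n and all natural numbers k and m, s_{k+2m+1}(n) − s_k(n) = T_{k+m+1}(n) · s_m(n). (This is the identity s_{k+p}(n) − s_k(n) = T_{k+(p+1)/2}(n)·s_{(p−1)/2}(n) with odd p = 2m + 1.) -/

import Mathlib

/-!
The numbers `s_k(n)` are the values at `n` of the dilated Chebyshev polynomials `W_k` of the fourth
kind, which extend to all integer indices by the reflection `W_{-k-1} = -W_k`. Like every two-sided
solution of the Chebyshev recurrence, they satisfy `C_a · W_j = W_{j+a} + W_{j-a}`, where `C_a` is
the dilated polynomial of the first kind, with value `T_a(n)` at `n`. Taking `j = m` and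
`a = k + m + 1` turns `W_{j-a}` into `W_{-k-1} = -W_k`.
-/

/-- The sequence `s_k(n)`: `s_0 = 1`, `s_1 = n + 1`, `s_{k+2} = n·s_{k+1} − s_k`. -/
def s (n : ℤ) : ℕ → ℤ
  | 0 => 1
  | 1 => n + 1
  | k + 2 => n * s n (k + 1) - s n k

/-- The sequence `r_k(n)`: `r_0 = 1`, `r_1 = n − 1`, `r_{k+2} = n·r_{k+1} − r_k`. -/
def r (n : ℤ) : ℕ → ℤ
  | 0 => 1
  | 1 => n - 1
  | k + 2 => n * r n (k + 1) - r n k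

/-- Dilated Chebyshev polynomials of the first kind: `T_0 = 2`, `T_1 = n`. -/
def T (n : ℤ) : ℕ → ℤ
  | 0 => 2
  | 1 => n
  | k + 2 => n * T n (k + 1) - T n k

/-- Dilated Chebyshev polynomials of the second kind: `U_0 = 1`, `U_1 = n`. -/
def U (n : ℤ) : ℕ → ℤ
  | 0 => 1
  | 1 => n
  | k + 2 => n * U n (k + 1) - U n k

section FourthKind

open Polynomial

variable (R : Type*) [CommRing R]

theorem chebyshevC_mul_chebyshevS (a j : ℤ) :
    Chebyshev.C R a * Chebyshev.S R j = Chebyshev.S R (j + a) + Chebyshev.S R (j - a) := by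
  induction a using Chebyshev.induct' with
  | zero => simp [two_mul]
  | one => rw [Chebyshev.C_one, Chebyshev.S_add_one]; ring
  | add_two a ih₁ ih₀ =>
    have hC := Chebyshev.C_add_two R a
    have hadd := Chebyshev.S_add_two R (j + a)
    have hsub := Chebyshev.S_sub_two R (j - a)
    simp only [add_assoc, sub_sub] at hadd hsub ih₁
    linear_combination Chebyshev.S R j * hC + X * ih₁ - ih₀ - hadd - hsub
  | neg a ih => rw [Chebyshev.C_neg, ih, sub_neg_eq_add, ← sub_eq_add_neg, add_comm]

/-- The Chebyshev polynomials of the fourth kind, indexed by all integers and dilated to be monic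
for `k ≥ 0`, so that `W_k(2 cos θ) = sin((k + 1/2)θ) / sin(θ/2)`. They extend the sequence `s` to
negative indices. -/
noncomputable def chebyshevW (k : ℤ) : R[X] :=
  Chebyshev.S R k + Chebyshev.S R (k - 1)

theorem chebyshevW_add_two (k : ℤ) :
    chebyshevW R (k + 2) = X * chebyshevW R (k + 1) - chebyshevW R k := by
  simp only [chebyshevW, show k + 2 - 1 = k + 1 by ring, add_sub_cancel_right]
  linear_combination Chebyshev.S_add_two R k + Chebyshev.S_add_one R k

theorem chebyshevW_neg_sub_one (k : ℤ) : chebyshevW R (-k - 1) = -chebyshevW R k := by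
  rw [chebyshevW, chebyshevW, Chebyshev.S_neg_sub_one, sub_sub, one_add_one_eq_two,
    Chebyshev.S_neg_sub_two]
  ring

theorem chebyshevC_mul_chebyshevW (a j : ℤ) :
    Chebyshev.C R a * chebyshevW R j = chebyshevW R (j + a) + chebyshevW R (j - a) := by
  simp only [chebyshevW, mul_add, chebyshevC_mul_chebyshevS, sub_add_eq_add_sub,
    sub_right_comm j 1 a]
  ring

theorem s_shift_identity_general (k m : ℤ) :
    chebyshevW R (k + (2 * m + 1)) - chebyshevW R k
      = Chebyshev.C R (k + m + 1) * chebyshevW R m := by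
  rw [chebyshevC_mul_chebyshevW, show m + (k + m + 1) = k + (2 * m + 1) by ring,
    show m - (k + m + 1) = -k - 1 by ring, chebyshevW_neg_sub_one, sub_eq_add_neg]

end FourthKind

theorem s_eq_eval_chebyshevW (n : ℤ) (k : ℕ) : s n k = (chebyshevW ℤ k).eval n := by
  induction k using Nat.twoStepInduction with
  | zero => simp [s, chebyshevW]
  | one => simp [s, chebyshevW]
  | more k ih₀ ih₁ =>
    push_cast at ih₁ ⊢
    simp [s, chebyshevW_add_two, ih₀, ih₁]

theorem T_eq_eval_chebyshevC (n : ℤ) (k : ℕ) :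
    T n k = (Polynomial.Chebyshev.C ℤ k).eval n := by
  induction k using Nat.twoStepInduction with
  | zero => simp [T]
  | one => simp [T]
  | more k ih₀ ih₁ =>
    push_cast at ih₁ ⊢
    simp [T, Polynomial.Chebyshev.C_add_two, ih₀, ih₁]

theorem s_shift_identity (n : ℤ) (k m : ℕ) :
    s n (k + (2 * m + 1)) - s n k = T n (k + m + 1) * s n m := by
  simpa [s_eq_eval_chebyshevW, T_eq_eval_chebyshevC] using
    congrArg (Polynomial.eval n) (s_shift_identity_general ℤ k m)
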